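/- At every point of Ω, the Ricci tensor of a Hessian metric satisfies R_{jk} = Σ_{s,r} Γ^s_{kr}Γ^r_{js} − Σ_r α_rΓ^r_{jk}. -/

import Mathlib

/-!
Write `G` for the Hessian metric and `H = G⁻¹`. Differentiating `G H = 1` gives
`∂_k H = -H (∂_k G) H`, and since `∂_k g_{ab} = 2 γ_{kab}` this reads
`∂_k g^{ip} = -2 ∑_b Γ^i_{kb} g^{bp}` (`pd_gi`). The product rule then yields
`∂_k Γ^i_{lj} = -2 ∑_b Γ^i_{kb} Γ^b_{lj} + ∑_p g^{ip} ∂_k γ_{plj}` (`pd_Chr`).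
The last sum is symmetric in `k` and `l`, because fourth derivatives of `φ` commute, so it drops
out of the curvature tensor and only quadratic terms remain:
`R^i_{jkl} = ∑_r (Γ^i_{lr} Γ^r_{kj} - Γ^i_{kr} Γ^r_{lj})` (`Riem_eq`).
Contracting `i` with `k` and using `α_r = ∑_s Γ^s_{sr}` gives the formula for the Ricci tensor.
Positive definiteness enters only through the invertibility of `G`.
-/


noncomputable section

/-- Partial derivative in the `i`-th coordinate direction. -/
def pd {n : ℕ} (i : Fin n) (f : (Fin n → ℝ) → ℝ) : (Fin n → ℝ) → ℝ :=
  fun x => fderiv ℝ f x (Pi.single i 1)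

variable {n : ℕ}

/-- The Hessian metric `g_{ij} = ∂_i ∂_j φ`. -/
def gmet (φ : (Fin n → ℝ) → ℝ) (x : Fin n → ℝ) : Matrix (Fin n) (Fin n) ℝ :=
  fun i j => pd i (pd j φ) x

/-- The inverse metric `g^{ij}`. -/
def gi (φ : (Fin n → ℝ) → ℝ) (x : Fin n → ℝ) : Matrix (Fin n) (Fin n) ℝ :=
  (gmet φ x)⁻¹

/-- The lowered difference tensor `γ_{ijk} = (1/2) ∂_i∂_j∂_k φ`. -/
def gam (φ : (Fin n → ℝ) → ℝ) (i j k : Fin n) : (Fin n → ℝ) → ℝ :=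
  fun x => (1 / 2) * pd i (pd j (pd k φ)) x

/-- The Christoffel symbols `Γ^i_{jk} = Σ_p g^{ip} γ_{pjk}`. -/
def Chr (φ : (Fin n → ℝ) → ℝ) (i j k : Fin n) : (Fin n → ℝ) → ℝ :=
  fun x => ∑ p, gi φ x i p * gam φ p j k x

/-- The first Koszul form `α_i = Σ_{r,p} g^{rp} γ_{pri}`. -/
def alph (φ : (Fin n → ℝ) → ℝ) (i : Fin n) : (Fin n → ℝ) → ℝ :=
  fun x => ∑ r, ∑ p, gi φ x r p * gam φ p r i x

/-- The second Koszul form `β_{ij} = ∂_i α_j`. -/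
def bet (φ : (Fin n → ℝ) → ℝ) (i j : Fin n) : (Fin n → ℝ) → ℝ :=
  pd i (alph φ j)

/-- Covariant derivative of the first Koszul form `∇_i α_j`. -/
def covAlpha (φ : (Fin n → ℝ) → ℝ) (i j : Fin n) : (Fin n → ℝ) → ℝ :=
  fun x => bet φ i j x - ∑ r, Chr φ r i j x * alph φ r x

/-- Covariant derivative of a covector field `∇_i X_j`. -/
def covCo (φ : (Fin n → ℝ) → ℝ) (X : Fin n → (Fin n → ℝ) → ℝ) (i j : Fin n) :
    (Fin n → ℝ) → ℝ :=
  fun x => pd i (X j) x - ∑ r, Chr φ r i j x * X r x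

/-- The Hessian `∇_i∇_j f` of a function. -/
def covHess (φ f : (Fin n → ℝ) → ℝ) (i j : Fin n) : (Fin n → ℝ) → ℝ :=
  fun x => pd i (pd j f) x - ∑ r, Chr φ r i j x * pd r f x

/-- Covariant derivative of the difference tensor `∇_i γ_{jkl}`. -/
def covGam (φ : (Fin n → ℝ) → ℝ) (i j k l : Fin n) : (Fin n → ℝ) → ℝ :=
  fun x => pd i (gam φ j k l) x -
    ∑ r, (Chr φ r i j x * gam φ r k l x + Chr φ r i k x * gam φ j r l x +
      Chr φ r i l x * gam φ j k r x)

/-- Second covariant derivative of the first Koszul form `∇_i∇_j α_k`. -/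
def cov2Alpha (φ : (Fin n → ℝ) → ℝ) (i j k : Fin n) : (Fin n → ℝ) → ℝ :=
  fun x => pd i (covAlpha φ j k) x -
    ∑ r, (Chr φ r i j x * covAlpha φ r k x + Chr φ r i k x * covAlpha φ j r x)

/-- The curvature tensor `R^i_{jkl}`. -/
def Riem (φ : (Fin n → ℝ) → ℝ) (i j k l : Fin n) : (Fin n → ℝ) → ℝ :=
  fun x => pd k (Chr φ i l j) x - pd l (Chr φ i k j) x +
    ∑ r, (Chr φ i k r x * Chr φ r l j x - Chr φ i l r x * Chr φ r k j x)

/-- The Ricci tensor `R_{jk} = Σ_s R^s_{jsk}`. -/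
def Ricci (φ : (Fin n → ℝ) → ℝ) (j k : Fin n) : (Fin n → ℝ) → ℝ :=
  fun x => ∑ s, Riem φ s j s k x

/-- The scalar curvature `R = Σ g^{jk} R_{jk}`. -/
def Scal (φ : (Fin n → ℝ) → ℝ) : (Fin n → ℝ) → ℝ :=
  fun x => ∑ j, ∑ k, gi φ x j k * Ricci φ j k x

/-- The Laplace–Beltrami operator of `g`. -/
def lap (φ u : (Fin n → ℝ) → ℝ) : (Fin n → ℝ) → ℝ :=
  fun x => ∑ i, ∑ j, gi φ x i j * (pd i (pd j u) x - ∑ k, Chr φ k i j x * pd k u x)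

/-- `|α|²`. -/
def normAlphaSq (φ : (Fin n → ℝ) → ℝ) : (Fin n → ℝ) → ℝ :=
  fun x => ∑ i, ∑ j, gi φ x i j * alph φ i x * alph φ j x

/-- `|γ|²`. -/
def normGamSq (φ : (Fin n → ℝ) → ℝ) : (Fin n → ℝ) → ℝ :=
  fun x => ∑ i, ∑ i', ∑ j, ∑ j', ∑ k, ∑ k',
    gi φ x i i' * gi φ x j j' * gi φ x k k' * gam φ i j k x * gam φ i' j' k' x

/-- `|∇γ|²`. -/
def normCovGamSq (φ : (Fin n → ℝ) → ℝ) : (Fin n → ℝ) → ℝ :=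
  fun x => ∑ i, ∑ i', ∑ j, ∑ j', ∑ k, ∑ k', ∑ l, ∑ l',
    gi φ x i i' * gi φ x j j' * gi φ x k k' * gi φ x l l' *
      covGam φ i j k l x * covGam φ i' j' k' l' x

/-- `|Rm|²` (the upper index is lowered with `g`). -/
def normRmSq (φ : (Fin n → ℝ) → ℝ) : (Fin n → ℝ) → ℝ :=
  fun x => ∑ i, ∑ i', ∑ j, ∑ j', ∑ k, ∑ k', ∑ l, ∑ l',
    gmet φ x i i' * gi φ x j j' * gi φ x k k' * gi φ x l l' *
      Riem φ i j k l x * Riem φ i' j' k' l' x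

/-- `|Ric|²`. -/
def normRicSq (φ : (Fin n → ℝ) → ℝ) : (Fin n → ℝ) → ℝ :=
  fun x => ∑ j, ∑ j', ∑ k, ∑ k',
    gi φ x j j' * gi φ x k k' * Ricci φ j k x * Ricci φ j' k' x

/-- The full contraction `Σ R_{ij} β_{ij}`. -/
def ricBeta (φ : (Fin n → ℝ) → ℝ) : (Fin n → ℝ) → ℝ :=
  fun x => ∑ i, ∑ i', ∑ j, ∑ j',
    gi φ x i i' * gi φ x j j' * Ricci φ i j x * bet φ i' j' x

/-- The full contraction `Σ R_{ij} ∇_i α_j`. -/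
def ricCovAlpha (φ : (Fin n → ℝ) → ℝ) : (Fin n → ℝ) → ℝ :=
  fun x => ∑ i, ∑ i', ∑ j, ∑ j',
    gi φ x i i' * gi φ x j j' * Ricci φ i j x * covAlpha φ i' j' x

/-- The full contraction `Σ (∇_i∇_j α_k) γ_{ijk}`. -/
def cov2AlphaGam (φ : (Fin n → ℝ) → ℝ) : (Fin n → ℝ) → ℝ :=
  fun x => ∑ i, ∑ i', ∑ j, ∑ j', ∑ k, ∑ k',
    gi φ x i i' * gi φ x j j' * gi φ x k k' * cov2Alpha φ i j k x * gam φ i' j' k' x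

variable {n : ℕ}

/-! ### Partial derivatives of the potential -/

lemma contDiff_pd {f : (Fin n → ℝ) → ℝ} (hf : ContDiff ℝ (⊤ : ℕ∞) f) (i : Fin n) :
    ContDiff ℝ (⊤ : ℕ∞) (pd i f) :=
  (hf.fderiv_right (m := (⊤ : ℕ∞)) (by norm_cast)).clm_apply contDiff_const

lemma differentiable_of_smooth {f : (Fin n → ℝ) → ℝ} (hf : ContDiff ℝ (⊤ : ℕ∞) f) :
    Differentiable ℝ f :=
  hf.differentiable (by norm_num)

lemma pd_comm {f : (Fin n → ℝ) → ℝ} (hf : ContDiff ℝ (⊤ : ℕ∞) f) (i j : Fin n) :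
    pd i (pd j f) = pd j (pd i f) := by
  funext x
  have hd : DifferentiableAt ℝ (fderiv ℝ f) x :=
    (hf.fderiv_right (m := 1) (by norm_cast)).differentiable (by norm_num) x
  have key : ∀ a b : Fin n,
      pd a (pd b f) x = fderiv ℝ (fderiv ℝ f) x (Pi.single a 1) (Pi.single b 1) := by
    intro a b
    have h := (hd.hasFDerivAt.clm_apply
      (hasFDerivAt_const (Pi.single b (1 : ℝ) : Fin n → ℝ) x)).fderiv
    change fderiv ℝ (fun y => fderiv ℝ f y (Pi.single b 1)) x (Pi.single a 1) = _
    rw [h]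
    simp
  have hs : IsSymmSndFDerivAt ℝ f x :=
    hf.contDiffAt.isSymmSndFDerivAt 
      (by simpa using WithTop.coe_le_coe.mpr (le_top (a := (2 : ℕ∞))))
  rw [key, key]
  exact hs _ _

lemma pd_sum_mul {A B : Fin n → (Fin n → ℝ) → ℝ} {x : Fin n → ℝ}
    (hA : ∀ p, DifferentiableAt ℝ (A p) x) (hB : ∀ p, DifferentiableAt ℝ (B p) x) (k : Fin n) :
    pd k (fun y => ∑ p, A p y * B p y) x =
      ∑ p, pd k (A p) x * B p x + ∑ p, A p x * pd k (B p) x := by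
  simp only [pd]
  rw [fderiv_fun_sum (fun p _ => (hA p).fun_mul (hB p)), sum_apply,
    ← Finset.sum_add_distrib]
  refine Finset.sum_congr rfl fun p _ => ?_
  rw [fderiv_fun_mul (hA p) (hB p)]
  simp
  ring

variable {φ : (Fin n → ℝ) → ℝ} {x : Fin n → ℝ}

lemma contDiff_gam (hφ : ContDiff ℝ (⊤ : ℕ∞) φ) (i j k : Fin n) :
    ContDiff ℝ (⊤ : ℕ∞) (gam φ i j k) :=
  contDiff_const.mul (contDiff_pd (contDiff_pd (contDiff_pd hφ k) j) i)

lemma gam_swap_left (hφ : ContDiff ℝ (⊤ : ℕ∞) φ) (i j k : Fin n) :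
    gam φ i j k = gam φ j i k := by
  unfold gam
  rw [pd_comm (contDiff_pd hφ k) i j]

lemma gam_swap_right (hφ : ContDiff ℝ (⊤ : ℕ∞) φ) (i j k : Fin n) :
    gam φ i j k = gam φ i k j := by
  unfold gam
  rw [pd_comm hφ j k]

lemma Chr_swap (hφ : ContDiff ℝ (⊤ : ℕ∞) φ) (i j k : Fin n) :
    Chr φ i j k = Chr φ i k j := by
  unfold Chr
  simp only [gam_swap_right hφ _ j k]

lemma pd_gmet (k a b : Fin n) : pd k (fun y => gmet φ y a b) x = 2 * gam φ k a b x := by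
  simp only [gam, gmet]
  change pd k (pd a (pd b φ)) x = _
  ring

/-- Symmetry of `∂_k γ_{plj}` in `k` and `l`, which cancels the fourth-order terms of the curvature. -/
lemma pd_gam_swap (hφ : ContDiff ℝ (⊤ : ℕ∞) φ) (k l p j : Fin n) :
    pd k (gam φ p l j) x = pd l (gam φ p k j) x := by
  have h : ∀ a b : Fin n,
      pd a (gam φ p b j) x = 1 / 2 * pd a (pd b (pd p (pd j φ))) x := by
    intro a b
    rw [gam_swap_left hφ p b j]
    have hd := differentiable_of_smooth
      (contDiff_pd (contDiff_pd (contDiff_pd hφ j) p) b) x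
    change fderiv ℝ (fun y => (1 / 2 : ℝ) * pd b (pd p (pd j φ)) y) x (Pi.single a 1) = _
    rw [fderiv_const_mul hd]
    rfl
  rw [h, h, pd_comm (contDiff_pd (contDiff_pd hφ j) p) k l]

/-! ### Differentiating the inverse metric -/

lemma differentiableAt_det {M : (Fin n → ℝ) → Matrix (Fin n) (Fin n) ℝ}
    (hM : ∀ i j, DifferentiableAt ℝ (fun y => M y i j) x) :
    DifferentiableAt ℝ (fun y => (M y).det) x := by
  simp only [Matrix.det_apply']
  refine DifferentiableAt.fun_sum fun σ _ => DifferentiableAt.const_mul ?_ _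
  exact (HasFDerivAt.finsetProd fun i _ => (hM (σ i) i).hasFDerivAt).differentiableAt

lemma differentiableAt_gmet (hφ : ContDiff ℝ (⊤ : ℕ∞) φ) (i j : Fin n) :
    DifferentiableAt ℝ (fun y => gmet φ y i j) x :=
  differentiable_of_smooth (contDiff_pd (contDiff_pd hφ j) i) x

/-- By Cramer's rule the entries of the inverse metric are quotients of polynomials in the
entries of the metric. -/
lemma differentiableAt_gi (hφ : ContDiff ℝ (⊤ : ℕ∞) φ) (hx : (gmet φ x).det ≠ 0)
    (i j : Fin n) : DifferentiableAt ℝ (fun y => gi φ y i j) x := by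
  simp only [gi, Matrix.inv_def, Matrix.smul_apply, Ring.inverse_eq_inv', smul_eq_mul,
    Matrix.adjugate_apply]
  refine ((differentiableAt_det fun a b => differentiableAt_gmet hφ a b).inv hx).mul
    (differentiableAt_det fun a b => ?_)
  simp only [Matrix.updateRow_apply]
  split_ifs
  · exact differentiableAt_const _
  · exact differentiableAt_gmet hφ a b

/-- `∂_k g^{ip} = -2 ∑_b Γ^i_{kb} g^{bp}`, obtained by differentiating `g g⁻¹ = 1`. -/
lemma pd_gi (hφ : ContDiff ℝ (⊤ : ℕ∞) φ) (hx : (gmet φ x).det ≠ 0) (k i p : Fin n) :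
    pd k (fun y => gi φ y i p) x = -2 * ∑ b, Chr φ i k b x * gi φ x b p := by
  let dG : Matrix (Fin n) (Fin n) ℝ := fun a b => pd k (fun y => gmet φ y a b) x
  let dH : Matrix (Fin n) (Fin n) ℝ := fun a b => pd k (fun y => gi φ y a b) x
  have hev : ∀ᶠ y in nhds x, (gmet φ y).det ≠ 0 :=
    (differentiableAt_det fun a b => differentiableAt_gmet hφ a b).continuousAt.eventually_ne hx
  have hleib : dG * gi φ x + gmet φ x * dH = 0 := by
    ext a c
    have hconst : (fun y => ∑ b, gmet φ y a b * gi φ y b c) =ᶠ[nhds x]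
        fun _ => (1 : Matrix (Fin n) (Fin n) ℝ) a c := by
      filter_upwards [hev] with y hy
      rw [← Matrix.mul_apply, gi, Matrix.mul_nonsing_inv _ (isUnit_iff_ne_zero.mpr hy)]
    have h0 : pd k (fun y => ∑ b, gmet φ y a b * gi φ y b c) x = 0 := by
      simp [pd, hconst.fderiv_eq]
    rw [pd_sum_mul (A := fun b y => gmet φ y a b) (B := fun b y => gi φ y b c)
      (fun b => differentiableAt_gmet hφ a b) (fun b => differentiableAt_gi hφ hx b c)] at h0
    rw [Matrix.add_apply, Matrix.mul_apply, Matrix.mul_apply]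
    exact h0
  have hinv : gi φ x * gmet φ x = 1 :=
    Matrix.nonsing_inv_mul _ (isUnit_iff_ne_zero.mpr hx)
  have hdH : dH = -(gi φ x * dG * gi φ x) := by
    have h := congrArg (fun M => gi φ x * M) hleib
    simp only [mul_add, mul_zero, ← mul_assoc, hinv, one_mul] at h
    exact eq_neg_of_add_eq_zero_right h
  have hChr : ∀ b, (gi φ x * dG) i b = 2 * Chr φ i k b x := by
    intro b
    rw [Matrix.mul_apply]
    simp only [dG, pd_gmet, Chr, Finset.mul_sum]
    refine Finset.sum_congr rfl fun a _ => ?_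
    rw [gam_swap_left hφ k a b]
    ring
  change dH i p = _
  rw [hdH, Matrix.neg_apply, Matrix.mul_apply, Finset.mul_sum, ← Finset.sum_neg_distrib]
  refine Finset.sum_congr rfl fun b _ => ?_
  rw [hChr]
  ring

/-! ### Curvature -/

lemma pd_Chr (hφ : ContDiff ℝ (⊤ : ℕ∞) φ) (hx : (gmet φ x).det ≠ 0) (k i l j : Fin n) :
    pd k (Chr φ i l j) x =
      -2 * ∑ b, Chr φ i k b x * Chr φ b l j x + ∑ p, gi φ x i p * pd k (gam φ p l j) x := by
  have hg : ∀ p, DifferentiableAt ℝ (gam φ p l j) x :=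
    fun p => differentiable_of_smooth (contDiff_gam hφ p l j) x
  change pd k (fun y => ∑ p, gi φ y i p * gam φ p l j y) x = _
  rw [pd_sum_mul (A := fun p y => gi φ y i p) (B := fun p => gam φ p l j)
    (fun p => differentiableAt_gi hφ hx i p) hg]
  simp only [pd_gi hφ hx]
  congr 1
  have hexp : ∀ b, Chr φ b l j x = ∑ p, gi φ x b p * gam φ p l j x := fun _ => rfl
  simp only [hexp, Finset.mul_sum, Finset.sum_mul]
  rw [Finset.sum_comm]
  simp only [mul_assoc]

/-- The curvature of a Hessian metric is quadratic in the Christoffel symbols. -/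
lemma Riem_eq (hφ : ContDiff ℝ (⊤ : ℕ∞) φ) (hx : (gmet φ x).det ≠ 0) (i j k l : Fin n) :
    Riem φ i j k l x =
      ∑ r, Chr φ i l r x * Chr φ r k j x - ∑ r, Chr φ i k r x * Chr φ r l j x := by
  simp only [Riem, pd_Chr hφ hx, pd_gam_swap hφ k l, Finset.sum_sub_distrib]
  ring

/-- The first Koszul form is the trace of the Christoffel symbols; this is its definition. -/
lemma alph_eq (r : Fin n) : alph φ r x = ∑ s, Chr φ s s r x := rfl

theorem ricci_of_hessian_metric {n : ℕ} (hn : 1 ≤ n) (φ : (Fin n → ℝ) → ℝ)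
    (hφ : ContDiff ℝ (⊤ : ℕ∞) φ) (Ω : Set (Fin n → ℝ)) (hΩ : IsOpen Ω)
    (hconn : IsConnected Ω) (hpos : ∀ x ∈ Ω, (gmet φ x).PosDef) :
    ∀ x ∈ Ω, ∀ j k,
      Ricci φ j k x
        = (∑ s, ∑ r, Chr φ s k r x * Chr φ r j s x)
          - ∑ r, alph φ r x * Chr φ r j k x := by
  intro x hxΩ j k
  have hx : (gmet φ x).det ≠ 0 := (hpos x hxΩ).det_pos.ne'
  simp only [Ricci, Riem_eq hφ hx, Finset.sum_sub_distrib, alph_eq, Finset.sum_mul]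
  congr 1
  · simp only [Chr_swap hφ _ j]
  · rw [Finset.sum_comm]
    simp only [Chr_swap hφ _ j k]

end
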